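/- For all integers k ≥ 1 and positive integers n₁, n₂, the Ramsey number of the path on k vertices versus the complete bipartite graph with parts of sizes n₁ and n₂ satisfies R(P_k, K_{n₁,n₂}) ≤ k + n₁ + n₂ − 2. -/

import Mathlib

/-- `G` has a copy in `C`: there is an injective graph homomorphism from `G` to `C`,
i.e. `C` contains `G` as a (not necessarily induced) subgraph. -/
def HasCopy {α β : Type*} (G : SimpleGraph α) (C : SimpleGraph β) : Prop :=
  ∃ f : G →g C, Function.Injective f

/-- The Ramsey number `R(G, H)`: the least `N` such that every red-blue colouring of the
edges of `K_N` (encoded by the graph `C` of red edges) contains a red copy of `G` or a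
blue copy of `H`. -/
noncomputable def ramseyNumber {α β : Type*} (G : SimpleGraph α) (H : SimpleGraph β) : ℕ :=
  sInf {N : ℕ | ∀ C : SimpleGraph (Fin N), HasCopy G C ∨ HasCopy H Cᶜ}

/-! Explore the red graph by depth-first search, and stop just after the `n₁`-th vertex is removed
from the stack. The stack is a red path at every moment, and a vertex is only removed from it once
all its red neighbours have been visited, so there is no red edge from the `n₁` removed vertices to
the unvisited ones. Just before the last removal the stack had at most `k - 1` vertices unless there
is a red `P_k`, so it now has at most `k - 2`, and at least
`(k + n₁ + n₂ - 2) - n₁ - (k - 2) = n₂` vertices are unvisited. -/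

open SimpleGraph Finset

variable {V : Type*} {G : SimpleGraph V}

/-- A state of a depth-first search of `G`: `S` is the set of vertices the search has finished with
and `l` is its stack, most recent vertex first; all other vertices are unvisited. -/
structure IsDFSState (G : SimpleGraph V) (S : Finset V) (l : List V) : Prop where
  isChain : l.IsChain G.Adj
  nodup : l.Nodup
  notMem : ∀ v ∈ l, v ∉ S
  mem_or_mem_of_adj : ∀ v ∈ S, ∀ w, G.Adj v w → w ∈ S ∨ w ∈ l

namespace IsDFSState

variable {S : Finset V} {l : List V} {a u : V}

theorem empty_nil : IsDFSState G ∅ [] := by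
  constructor <;> simp

theorem push (h : IsDFSState G S l) (huS : u ∉ S) (hul : u ∉ l) (hu : ∀ v ∈ l.head?, G.Adj u v) :
    IsDFSState G S (u :: l) where
  isChain := h.isChain.cons hu
  nodup := h.nodup.cons hul
  notMem := List.forall_mem_cons.2 ⟨huS, h.notMem⟩
  mem_or_mem_of_adj v hv w hvw :=
    (h.mem_or_mem_of_adj v hv w hvw).imp_right (List.mem_cons_of_mem u)

theorem pop [DecidableEq V] (h : IsDFSState G S (a :: l))
    (ha : ∀ w, G.Adj a w → w ∈ S ∨ w ∈ a :: l) : IsDFSState G (insert a S) l where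
  isChain := h.isChain.tail
  nodup := h.nodup.of_cons
  notMem v hv := by
    have hva : v ≠ a := ne_of_mem_of_not_mem hv (List.nodup_cons.1 h.nodup).1
    simp [hva, h.notMem v (List.mem_cons_of_mem a hv)]
  mem_or_mem_of_adj v hv w hvw := by
    have hw : w ∈ S ∨ w ∈ a :: l := by
      obtain rfl | hvS := mem_insert.1 hv
      · exact ha w hvw
      · exact h.mem_or_mem_of_adj v hvS w hvw
    simp only [List.mem_cons, mem_insert] at hw ⊢
    tauto

theorem exists_longest [Finite V] (h : IsDFSState G S l) :
    ∃ l', IsDFSState G S l' ∧ ∀ l'', IsDFSState G S l'' → l''.length ≤ l'.length := by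
  have finite_nodup : {l : List V | l.Nodup}.Finite := by
    classical
    have := Fintype.ofFinite V
    exact Finite.of_fintype {l : List V // l.Nodup}
  have hfin : {l | IsDFSState G S l}.Finite := finite_nodup.subset fun _ hl ↦ hl.nodup
  obtain ⟨l', hl', hmax⟩ := hfin.exists_maximalFor List.length _ ⟨l, h⟩
  exact ⟨l', hl', fun l'' hl'' ↦ (le_total _ _).elim id (hmax hl'')⟩

theorem exists_pop [Fintype V] [DecidableEq V] (h : IsDFSState G S l)
    (hS : #S < Fintype.card V) :
    ∃ a l', IsDFSState G S (a :: l') ∧ IsDFSState G (insert a S) l' := by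
  -- Instead of pushing one vertex at a time, switch to a longest stack, which need not extend `l`.
  obtain ⟨l', hl', hmax⟩ := h.exists_longest
  have not_push {w : V} : ¬ IsDFSState G S (w :: l') := fun hw ↦ by simpa using hmax _ hw
  cases l' with
  | nil =>
    obtain ⟨u, -, hu⟩ := exists_mem_notMem_of_card_lt_card (t := univ) hS
    exact absurd (hl'.push hu (by simp) (by simp)) not_push
  | cons a l' =>
    refine ⟨a, l', hl', hl'.pop fun w haw ↦ ?_⟩
    by_contra! hw
    exact not_push (hl'.push hw.1 hw.2 (by simpa using haw.symm))

theorem card_insert_eq [DecidableEq V] (h : IsDFSState G S (a :: l)) : #(insert a S) = #S + 1 :=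
  card_insert_of_notMem (h.notMem a List.mem_cons_self)

theorem exists_card_eq (G : SimpleGraph V) [Fintype V] {d : ℕ} (hd : d ≤ Fintype.card V) :
    ∃ S l, #S = d ∧ IsDFSState G S l := by
  classical
  induction d with
  | zero => exact ⟨∅, [], card_empty, empty_nil⟩
  | succ d ih =>
    obtain ⟨S, l, rfl, hSl⟩ := ih (by omega)
    obtain ⟨a, l', hbefore, hafter⟩ := hSl.exists_pop hd
    exact ⟨insert a S, l', hbefore.card_insert_eq, hafter⟩

theorem compl_isCompleteBetween [Fintype V] [DecidableEq V] (h : IsDFSState G S l) :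
    Gᶜ.IsCompleteBetween S ↑(S ∪ l.toFinset)ᶜ := by
  intro v hv w hw
  have hw : w ∉ S ∧ w ∉ l := by simpa using hw
  exact ⟨ne_of_mem_of_not_mem hv hw.1, fun hvw ↦ (h.mem_or_mem_of_adj v hv w hvw).elim hw.1 hw.2⟩

end IsDFSState

theorem pathGraph_isContained_of_isChain {l : List V} (hl : l.IsChain G.Adj) (hnodup : l.Nodup) :
    pathGraph l.length ⊑ G := by
  obtain rfl | hne := eq_or_ne l []
  · exact .of_isEmpty (α := Fin 0)
  have hpath : (Walk.ofSupport l hne hl).IsPath := by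
    rwa [Walk.isPath_def, Walk.support_ofSupport]
  have hlen : (Walk.ofSupport l hne hl).length + 1 = l.length := by
    rw [← Walk.length_support, Walk.support_ofSupport]
  exact hlen ▸ hpath.isContained_pathGraph

theorem pathGraph_isContained_pathGraph {m n : ℕ} (h : m ≤ n) : pathGraph m ⊑ pathGraph n :=
  ⟨⟨⟨Fin.castLE h, by simp [pathGraph_adj]⟩, Fin.castLE_injective h⟩⟩

theorem pathGraph_isContained_or_completeBipartiteGraph_isContained_compl
    {α β : Type*} [Fintype V] [Fintype α] [Fintype β] [Nonempty α] [Nonempty β] (G : SimpleGraph V)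
    {k : ℕ} (hk : 1 ≤ k) (hV : k + Fintype.card α + Fintype.card β ≤ Fintype.card V + 2) :
    pathGraph k ⊑ G ∨ completeBipartiteGraph α β ⊑ Gᶜ := by
  classical
  have hα : 0 < Fintype.card α := Fintype.card_pos
  have hβ : 0 < Fintype.card β := Fintype.card_pos
  obtain ⟨S, l₀, hS, hSl₀⟩ := IsDFSState.exists_card_eq G (d := Fintype.card α - 1) (by omega)
  obtain ⟨a, l, hbefore, hafter⟩ := hSl₀.exists_pop (by omega)
  refine or_iff_not_imp_left.2 fun hfree ↦ ?_
  have hlen : l.length + 1 < k := by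
    by_contra! hkl
    exact hfree ((pathGraph_isContained_pathGraph hkl).trans
      (pathGraph_isContained_of_isChain hbefore.isChain hbefore.nodup))
  have hleft : #(insert a S) = Fintype.card α := by
    rw [hbefore.card_insert_eq]
    omega
  have hunvisited : Fintype.card β ≤ #(insert a S ∪ l.toFinset)ᶜ := by
    have hvisited := card_union_le (insert a S) l.toFinset
    have hstack := l.toFinset_card_le
    rw [card_compl]
    omega
  obtain ⟨T, hT, hright⟩ := exists_subset_card_eq hunvisited
  exact completeBipartiteGraph_isContained_iff.2 ⟨insert a S, T, hleft, hright,
    fun _ hv _ hw ↦ hafter.compl_isCompleteBetween hv (hT hw)⟩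

theorem hasCopy_iff_isContained {α β : Type*} {G : SimpleGraph α} {C : SimpleGraph β} :
    HasCopy G C ↔ G ⊑ C :=
  ⟨fun ⟨f, hf⟩ ↦ ⟨f.toCopy hf⟩, fun ⟨f⟩ ↦ ⟨f.toHom, f.injective⟩⟩

theorem stmt_4 (k n₁ n₂ : ℕ) (hk : 1 ≤ k) (h₁ : 1 ≤ n₁) (h₂ : 1 ≤ n₂) :
    ramseyNumber (SimpleGraph.pathGraph k) (completeBipartiteGraph (Fin n₁) (Fin n₂)) ≤
      k + n₁ + n₂ - 2 := by
  have : Nonempty (Fin n₁) := ⟨⟨0, h₁⟩⟩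
  have : Nonempty (Fin n₂) := ⟨⟨0, h₂⟩⟩
  refine Nat.sInf_le fun C ↦ ?_
  simp only [hasCopy_iff_isContained]
  refine pathGraph_isContained_or_completeBipartiteGraph_isContained_compl C hk ?_
  simp only [Fintype.card_fin]
  omega
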